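/- Let R > 0 and let κ : ℝ^d → ℝ be Borel measurable with 1_{{|y| ≤ R}} ≤ κ ≤ 1_{{|y| ≤ 2R}}. Let u : ℝ^d → ℝ be twice continuously differentiable with u and all of its partial derivatives of order ≤ 2 bounded. Then for every ε ∈ (0, min(R,1)] and all x, y ∈ ℝ^d, |u(x+y) − u(x) − ⟨y, ∇u(x)⟩·κ(y)| ≤ 2(R+1)·b_ε(y)·Σ_{|α| ≤ 2} ‖∂^α u‖_∞, where the sum runs over all multi-indices α with |α| ≤ 2 and ‖·‖_∞ denotes the supremum norm on ℝ^d. -/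

import Mathlib

/-!
For `‖y‖ ≤ ε ≤ R` the cut-off equals `1`, and the left side is a second order Taylor remainder.
Two applications of the mean value inequality along segments bound it by the supremum of
`|D²u(z)(y, y)| ≤ ∑ⱼₖ |yⱼ| |yₖ| ‖∂ⱼ∂ₖu‖_∞ ≤ ‖y‖² ∑ⱼₖ ‖∂ⱼ∂ₖu‖_∞`. By symmetry of the second
derivative the full double sum is at most twice the sum over `j ≤ k`, and `2 ≤ 2 (R + 1)`; the
factor `1/2` of Taylor's formula is not needed (`taylor_bound`).

For `‖y‖ > ε` one has `bfun ε y = 1`, the difference `u (x + y) - u x` is at most `2 ‖u‖_∞`, and the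
gradient term is at most `2 R ∑ⱼ ‖∂ⱼu‖_∞`, because `0 ≤ κ ≤ 1` and `κ` vanishes outside the
ball of radius `2 R`.
-/

noncomputable section

/-- `bfun ε y = |y|²` if `|y| ≤ ε` and `= 1` otherwise. -/
def bfun {d : ℕ} (ε : ℝ) (y : EuclideanSpace ℝ (Fin d)) : ℝ :=
  if ‖y‖ ≤ ε then ‖y‖ ^ 2 else 1

/-- First order partial derivative `∂ⱼ u`. -/
def pd {d : ℕ} (j : Fin d) (u : EuclideanSpace ℝ (Fin d) → ℝ)
    (x : EuclideanSpace ℝ (Fin d)) : ℝ :=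
  fderiv ℝ u x (EuclideanSpace.single j 1)

/-- Second order partial derivative `∂ⱼ∂ₖ u`. -/
def pd2 {d : ℕ} (j k : Fin d) (u : EuclideanSpace ℝ (Fin d) → ℝ)
    (x : EuclideanSpace ℝ (Fin d)) : ℝ :=
  fderiv ℝ (fun z => fderiv ℝ u z (EuclideanSpace.single k 1)) x (EuclideanSpace.single j 1)

/-- Expansion of the directional derivative in partial derivatives. -/
lemma fderiv_apply_eq_sum {d : ℕ} (f : EuclideanSpace ℝ (Fin d) → ℝ)
    (z y : EuclideanSpace ℝ (Fin d)) : fderiv ℝ f z y = ∑ j, y j * pd j f z := by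
  conv_lhs => rw [← (EuclideanSpace.basisFun (Fin d) ℝ).sum_repr y]
  simp [pd]

lemma pd2_eq {d : ℕ} {u : EuclideanSpace ℝ (Fin d) → ℝ} (hu : ContDiff ℝ 2 u) (j k : Fin d)
    (x : EuclideanSpace ℝ (Fin d)) :
    pd2 j k u x =
      fderiv ℝ (fderiv ℝ u) x (EuclideanSpace.single j 1) (EuclideanSpace.single k 1) := by
  have hd : DifferentiableAt ℝ (fderiv ℝ u) x :=
    (hu.fderiv_right (m := 1) (by norm_num)).differentiable (by norm_num) x
  unfold pd2
  rw [fderiv_clm_apply hd (differentiableAt_const _)]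
  simp

lemma pd2_symm {d : ℕ} {u : EuclideanSpace ℝ (Fin d) → ℝ} (hu : ContDiff ℝ 2 u) (j k : Fin d)
    (x : EuclideanSpace ℝ (Fin d)) : pd2 j k u x = pd2 k j u x := by
  rw [pd2_eq hu, pd2_eq hu]
  exact (hu.contDiffAt.isSymmSndFDerivAt (by simp)) _ _

/-- Mean value inequality along the segment from `x` to `x + y`, using only the derivative in the
direction `y`. -/
lemma abs_sub_le_of_segment {d : ℕ} {f : EuclideanSpace ℝ (Fin d) → ℝ} (hf : Differentiable ℝ f)
    (x y : EuclideanSpace ℝ (Fin d)) (C : ℝ)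
    (h : ∀ t ∈ Set.Icc (0 : ℝ) 1, |fderiv ℝ f (x + t • y) y| ≤ C) :
    |f (x + y) - f x| ≤ C := by
  have hd : ∀ t : ℝ, HasDerivAt (fun t : ℝ => f (x + t • y)) (fderiv ℝ f (x + t • y) y) t := by
    intro t
    have hl : HasDerivAt (fun t : ℝ => x + t • y) y t := by
      simpa using ((hasDerivAt_id t).smul_const y).const_add x
    exact (hf (x + t • y)).hasFDerivAt.comp_hasDerivAt t hl
  have := norm_image_sub_le_of_norm_deriv_le_segment_01' (f := fun t : ℝ => f (x + t • y))
    (fun t _ => (hd t).hasDerivWithinAt) (fun t ht => h t ⟨ht.1, ht.2.le⟩)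
  simpa using this

/-- Folding a symmetric double sum onto the index pairs `j ≤ k` costs at most a factor `2`. -/
lemma sum_prod_le_two_mul {d : ℕ} (M : Fin d → Fin d → ℝ) (hM : ∀ j k, 0 ≤ M j k)
    (hs : ∀ j k, M j k = M k j) :
    ∑ p : Fin d × Fin d, M p.1 p.2 ≤
      2 * ∑ p ∈ Finset.univ.filter (fun p : Fin d × Fin d => p.1 ≤ p.2), M p.1 p.2 := by
  rw [← Finset.sum_filter_add_sum_filter_not Finset.univ (fun p : Fin d × Fin d => p.1 ≤ p.2),
    two_mul]
  gcongr 1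
  calc ∑ p ∈ Finset.univ.filter (fun p : Fin d × Fin d => ¬ p.1 ≤ p.2), M p.1 p.2
      = ∑ p ∈ Finset.univ.filter (fun p : Fin d × Fin d => p.1 < p.2), M p.1 p.2 := by
        refine Finset.sum_nbij' Prod.swap Prod.swap ?_ ?_ ?_ ?_ ?_ <;> simp [hs]
    _ ≤ _ := by
        refine Finset.sum_le_sum_of_subset_of_nonneg ?_ (fun p _ _ => hM _ _)
        intro p hp
        simp only [Finset.mem_filter, Finset.mem_univ, true_and] at hp ⊢
        exact hp.le

/-- Second order Taylor remainder bound in terms of symmetric bounds `M j k` on `|∂ⱼ∂ₖu|`. -/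
lemma taylor_bound {d : ℕ} {u : EuclideanSpace ℝ (Fin d) → ℝ} (hu : ContDiff ℝ 2 u)
    (M : Fin d → Fin d → ℝ) (hM : ∀ j k z, |pd2 j k u z| ≤ M j k)
    (hs : ∀ j k, M j k = M k j) (x y : EuclideanSpace ℝ (Fin d)) :
    |u (x + y) - u x - fderiv ℝ u x y| ≤
      2 * ‖y‖ ^ 2 *
        ∑ p ∈ Finset.univ.filter (fun p : Fin d × Fin d => p.1 ≤ p.2), M p.1 p.2 := by
  have hM0 : ∀ j k, 0 ≤ M j k := fun j k => (abs_nonneg _).trans (hM j k 0)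
  have hu1 : Differentiable ℝ u := hu.differentiable (by norm_num)
  have hdu : Differentiable ℝ (fderiv ℝ u) :=
    (hu.fderiv_right (m := 1) (by norm_num)).differentiable (by norm_num)
  set C := 2 * ‖y‖ ^ 2 *
    ∑ p ∈ Finset.univ.filter (fun p : Fin d × Fin d => p.1 ≤ p.2), M p.1 p.2 with hC
  have hw : Differentiable ℝ (fun z => fderiv ℝ u z y) :=
    fun z => (hdu z).clm_apply (differentiableAt_const y)
  have hpd : ∀ k, Differentiable ℝ (pd k u) :=
    fun k z => (hdu z).clm_apply (differentiableAt_const _)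
  have hsec : ∀ z, |fderiv ℝ (fun z => fderiv ℝ u z y) z y| ≤ C := by
    intro z
    have hexp : fderiv ℝ (fun z => fderiv ℝ u z y) z y =
        ∑ p : Fin d × Fin d, y p.1 * y p.2 * pd2 p.1 p.2 u z := by
      have h1 : (fun z => fderiv ℝ u z y) = fun z => ∑ k, y k * pd k u z :=
        funext fun z => fderiv_apply_eq_sum u z y
      rw [fderiv_apply_eq_sum, Fintype.sum_prod_type]
      refine Finset.sum_congr rfl fun j _ => ?_
      rw [h1, pd, fderiv_fun_sum (fun k _ => (hpd k z).const_mul _),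
        sum_apply, Finset.mul_sum]
      refine Finset.sum_congr rfl fun k _ => ?_
      rw [fderiv_const_mul (hpd k z)]
      change y j * (y k * pd2 j k u z) = _
      ring
    rw [hexp]
    calc |∑ p : Fin d × Fin d, y p.1 * y p.2 * pd2 p.1 p.2 u z|
        ≤ ∑ p : Fin d × Fin d, |y p.1 * y p.2 * pd2 p.1 p.2 u z| :=
          Finset.abs_sum_le_sum_abs _ _
      _ ≤ ∑ p : Fin d × Fin d, ‖y‖ ^ 2 * M p.1 p.2 := by
          refine Finset.sum_le_sum fun p _ => ?_
          have h1 : |y p.1| ≤ ‖y‖ := PiLp.norm_apply_le y p.1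
          have h2 : |y p.2| ≤ ‖y‖ := PiLp.norm_apply_le y p.2
          have h3 := hM p.1 p.2 z
          rw [abs_mul, abs_mul, pow_two]
          gcongr
      _ = ‖y‖ ^ 2 * ∑ p : Fin d × Fin d, M p.1 p.2 := by rw [Finset.mul_sum]
      _ ≤ ‖y‖ ^ 2 * (2 * _) := by
          gcongr
          exact sum_prod_le_two_mul M hM0 hs
      _ = C := by rw [hC]; ring
  have hfirst : ∀ t ∈ Set.Icc (0 : ℝ) 1,
      |fderiv ℝ u (x + t • y) y - fderiv ℝ u x y| ≤ C := by
    intro t ht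
    refine abs_sub_le_of_segment hw x (t • y) C fun s _ => ?_
    rw [map_smul, smul_eq_mul, abs_mul, abs_of_nonneg ht.1]
    exact (mul_le_of_le_one_left (abs_nonneg _) ht.2).trans (hsec _)
  -- The mean value inequality is applied to `u` minus its linear part at `x`.
  have hg : ∀ z, HasFDerivAt (fun z => u z - fderiv ℝ u x z) (fderiv ℝ u z - fderiv ℝ u x) z :=
    fun z => (hu1 z).hasFDerivAt.sub (fderiv ℝ u x).hasFDerivAt
  have := abs_sub_le_of_segment (fun z => (hg z).differentiableAt) x y C fun t ht => by
    rw [(hg _).fderiv]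
    exact hfirst t ht
  convert this using 2
  rw [map_add]
  ring

theorem stmt7 {d : ℕ} (R : ℝ) (hR : 0 < R) (κ : EuclideanSpace ℝ (Fin d) → ℝ)
    (hκm : Measurable κ)
    (hκ : ∀ y : EuclideanSpace ℝ (Fin d),
      (if ‖y‖ ≤ R then (1 : ℝ) else 0) ≤ κ y ∧ κ y ≤ (if ‖y‖ ≤ 2 * R then (1 : ℝ) else 0))
    (u : EuclideanSpace ℝ (Fin d) → ℝ) (hu : ContDiff ℝ 2 u)
    (hub : ∃ C : ℝ, ∀ z, |u z| ≤ C)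
    (h1b : ∀ j : Fin d, ∃ C : ℝ, ∀ z, |pd j u z| ≤ C)
    (h2b : ∀ j k : Fin d, ∃ C : ℝ, ∀ z, |pd2 j k u z| ≤ C) :
    ∀ ε : ℝ, 0 < ε → ε ≤ min R 1 → ∀ x y : EuclideanSpace ℝ (Fin d),
      |u (x + y) - u x - fderiv ℝ u x y * κ y| ≤
        2 * (R + 1) * bfun ε y *
          ((⨆ z, |u z|) + ∑ j : Fin d, (⨆ z, |pd j u z|)
            + ∑ p ∈ Finset.univ.filter (fun p : Fin d × Fin d => p.1 ≤ p.2),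
                (⨆ z, |pd2 p.1 p.2 u z|)) := by
  intro ε hε hεR x y
  have hεR' : ε ≤ R := hεR.trans (min_le_left _ _)
  have hA : ∀ z, |u z| ≤ ⨆ z, |u z| := by
    obtain ⟨C, hC⟩ := hub
    exact fun z => le_ciSup (f := fun z => |u z|) ⟨C, by rintro _ ⟨z, rfl⟩; exact hC z⟩ z
  have hB : ∀ j z, |pd j u z| ≤ ⨆ z, |pd j u z| := by
    intro j z
    obtain ⟨C, hC⟩ := h1b j
    exact le_ciSup (f := fun z => |pd j u z|) ⟨C, by rintro _ ⟨z, rfl⟩; exact hC z⟩ z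
  have hD : ∀ j k z, |pd2 j k u z| ≤ ⨆ z, |pd2 j k u z| := by
    intro j k z
    obtain ⟨C, hC⟩ := h2b j k
    exact le_ciSup (f := fun z => |pd2 j k u z|) ⟨C, by rintro _ ⟨z, rfl⟩; exact hC z⟩ z
  have hT := taylor_bound hu (fun j k => ⨆ z, |pd2 j k u z|) hD
    (fun j k => by simp only [pd2_symm hu j k]) x y
  have hG : |fderiv ℝ u x y| ≤ ‖y‖ * ∑ j : Fin d, (⨆ z, |pd j u z|) := by
    rw [fderiv_apply_eq_sum, Finset.mul_sum]
    refine (Finset.abs_sum_le_sum_abs _ _).trans (Finset.sum_le_sum fun j _ => ?_)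
    have h1 : |y j| ≤ ‖y‖ := PiLp.norm_apply_le y j
    rw [abs_mul]
    exact mul_le_mul h1 (hB j x) (abs_nonneg _) (norm_nonneg _)
  have hA0 : 0 ≤ ⨆ z, |u z| := (abs_nonneg _).trans (hA 0)
  have hB0 : 0 ≤ ∑ j : Fin d, (⨆ z, |pd j u z|) :=
    Finset.sum_nonneg fun j _ => (abs_nonneg _).trans (hB j 0)
  have hD0 : 0 ≤ ∑ p ∈ Finset.univ.filter (fun p : Fin d × Fin d => p.1 ≤ p.2),
      (⨆ z, |pd2 p.1 p.2 u z|) :=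
    Finset.sum_nonneg fun p _ => (abs_nonneg _).trans (hD p.1 p.2 0)
  have hAx := hA x
  have hAxy := hA (x + y)
  generalize (⨆ z, |u z|) = A at *
  generalize ∑ j : Fin d, (⨆ z, |pd j u z|) = B at *
  generalize ∑ p ∈ Finset.univ.filter (fun p : Fin d × Fin d => p.1 ≤ p.2),
      (⨆ z, |pd2 p.1 p.2 u z|) = D at *
  obtain ⟨hκ1, hκ2⟩ := hκ y
  unfold bfun
  split_ifs with hy
  · have hyR := hy.trans hεR'
    have hκ : κ y = 1 := by
      rw [if_pos hyR] at hκ1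
      rw [if_pos (by linarith)] at hκ2
      exact le_antisymm hκ2 hκ1
    rw [hκ, mul_one]
    refine hT.trans ?_
    have h1 : D ≤ A + B + D := by linarith
    have h2 : 2 * ‖y‖ ^ 2 ≤ 2 * (R + 1) * ‖y‖ ^ 2 := by gcongr; linarith
    exact mul_le_mul h2 h1 hD0 (by positivity)
  · have hgrad : |fderiv ℝ u x y * κ y| ≤ 2 * R * B := by
      have hκ0 : 0 ≤ κ y := le_trans (by split_ifs <;> norm_num) hκ1
      rw [abs_mul, abs_of_nonneg hκ0]
      split_ifs at hκ2 with h2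
      · calc |fderiv ℝ u x y| * κ y ≤ |fderiv ℝ u x y| :=
              mul_le_of_le_one_right (abs_nonneg _) hκ2
          _ ≤ ‖y‖ * B := hG
          _ ≤ 2 * R * B := by gcongr
      · rw [le_antisymm hκ2 hκ0, mul_zero]
        positivity
    have h1 := abs_sub (u (x + y) - u x) (fderiv ℝ u x y * κ y)
    have h2 := abs_sub (u (x + y)) (u x)
    nlinarith [mul_nonneg hR.le hA0, mul_nonneg hR.le hD0]

end
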